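/- Let G be a connected graph on {x_1,...,x_t, y_1,...,y_t}, t ≥ 2, whose edge set is {x_i y_i : 1 ≤ i ≤ t} ∪ {x_i x_j : 1 ≤ i < j ≤ t} (so each y_i is a leaf and the x-vertices induce a complete graph). Let ω give weight 1 to every edge x_i x_j and weight m_i = ω(x_i y_i) to the pendant edges. Then R/I(G_ω)^n is Cohen-Macaulay for all n ≥ 1 if and only if m_i ≥ 2 for all i = 1,...,t. -/

import Mathlib

open MvPolynomial Sum

/-- `R/I` is Cohen–Macaulay: there is a regular sequence on `R/I` contained in the
maximal ideal generated by the variables whose length equals the Krull dimension of `R/I`. -/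
def IsCMQuot {K : Type*} [Field K] {σ : Type*} (I : Ideal (MvPolynomial σ K)) : Prop :=
  ∃ rs : List (MvPolynomial σ K),
    (∀ r ∈ rs, r ∈ Ideal.span (Set.range (X : σ → MvPolynomial σ K))) ∧
    RingTheory.Sequence.IsRegular (MvPolynomial σ K ⧸ I) rs ∧
    (rs.length : WithBot (WithTop ℕ)) = ringKrullDim (MvPolynomial σ K ⧸ I)

/-!
**Sufficiency.** Set `y_i = x_i` one index at a time. This turns the generator
`x_i ^ a * y_i ^ b` into `x_i ^ (a + b)`, so one stays among the ideals generated by all `x_i x_j`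
and one monomial `x_i ^ a_i * y_i ^ b_i` for each `i`. The monomials in the powers of such an ideal
are described by linear inequalities, and if `a_i ≥ 2` for all `i`, then a factor
`x_i ^ a_i * y_i ^ b_i` can be traded for two spare copies of `x_i`. Such trades show that
`y_p - x_p` is a nonzerodivisor modulo every power, hence the `t` elements `y_i - x_i` form a
regular sequence, and `t` is the dimension.

**Necessity.** If `m_p = 1`, then already `R/I^2` is not Cohen–Macaulay. When there is a generator
`g` not involving `x_p`, other than some `x_q y_q` with `m_q = 1`, the annihilator of `x_p g` modulo
`I^2` contains all `x_i` and `y_p`, which yields an associated prime of dimension less than `t`.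
Otherwise `t = 2` and `m = (1, 1)`; then `x_1 x_2` is annihilated modulo `I^2` by
`(x_2, y_1) * (x_1, y_2)`, and Hartshorne's connectedness argument contradicts depth `2`.
-/

open RingTheory.Sequence

section AssociatedPrimes

variable {R : Type*} [CommRing R]

lemma ringKrullDim_quotient_add_one_le_of_lt {p q : Ideal R} [p.IsPrime] (hpq : p < q) :
    ringKrullDim (R ⧸ q) + 1 ≤ ringKrullDim (R ⧸ p) := by
  obtain ⟨x, hxq, hxp⟩ := SetLike.exists_of_lt hpq
  refine ringKrullDim_succ_le_of_surjective (Ideal.Quotient.factor hpq.le)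
    (Ideal.Quotient.factor_surjective hpq.le) (r := Ideal.Quotient.mk p x) ?_ ?_
  · rwa [mem_nonZeroDivisors_iff_ne_zero, Ne, Ideal.Quotient.eq_zero_iff_mem]
  · rwa [Ideal.Quotient.factor_mk, Ideal.Quotient.eq_zero_iff_mem]

variable {M : Type*} [AddCommGroup M] [Module R M]

lemma quotSMulTop_map_torsionBySet_injective {r : R} (hr : IsSMulRegular M r) (s : Set R) :
    Function.Injective (QuotSMulTop.map r (Submodule.torsionBySet R M s).subtype) := by
  rw [injective_iff_map_eq_zero]
  intro z hz
  obtain ⟨n, rfl⟩ := Submodule.Quotient.mk_surjective _ z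
  rw [QuotSMulTop.map_apply_mk, Submodule.Quotient.mk_eq_zero,
    Submodule.mem_smul_pointwise_iff_exists] at hz
  obtain ⟨y, -, hy⟩ := hz
  have hy_mem : y ∈ Submodule.torsionBySet R M s := by
    rw [Submodule.mem_torsionBySet_iff]
    intro a
    refine hr.right_eq_zero_of_smul ?_
    rw [smul_comm, hy]
    exact (Submodule.mem_torsionBySet_iff _ _).1 n.2 a
  rw [Submodule.Quotient.mk_eq_zero, Submodule.mem_smul_pointwise_iff_exists]
  exact ⟨⟨y, hy_mem⟩, trivial, Subtype.ext hy⟩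

variable [IsNoetherianRing R]

lemma exists_isAssociatedPrime_of_colon_le {P : Ideal R} [P.IsPrime] {x : M}
    (hx : (⊥ : Submodule R M).colon {x} ≤ P) :
    ∃ q : Ideal R, IsAssociatedPrime q M ∧ (⊥ : Submodule R M).colon {x} ≤ q ∧ q ≤ P := by
  obtain ⟨q, hq, hqP⟩ := Ideal.exists_minimalPrimes_le hx
  exact ⟨q, isAssociatedPrime_iff.2
    ⟨hq.isPrime, Submodule.exists_eq_colon_of_mem_minimalPrimes hq⟩, hq.1.2, hqP⟩

lemma exists_isAssociatedPrime_of_mem_support {P : PrimeSpectrum R}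
    (hP : P ∈ Module.support R M) : ∃ q : Ideal R, IsAssociatedPrime q M ∧ q ≤ P.asIdeal := by
  obtain ⟨x, hx⟩ := Module.mem_support_iff_exists_annihilator.1 hP
  rw [← Submodule.bot_colon'] at hx
  obtain ⟨q, hq, -, hqP⟩ := exists_isAssociatedPrime_of_colon_le hx
  exact ⟨q, hq, hqP⟩

lemma mem_support_torsionBySet_of_isAssociatedPrime {p : Ideal R} {P : PrimeSpectrum R}
    (hp : IsAssociatedPrime p M) (hpP : p ≤ P.asIdeal) :
    P ∈ Module.support R (Submodule.torsionBySet R M p) := by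
  obtain ⟨-, x, hx⟩ := isAssociatedPrime_iff.1 hp
  have smul_eq_zero_iff (a : R) : a • x = 0 ↔ a ∈ p := by
    rw [hx, Submodule.mem_colon_singleton, Submodule.mem_bot]
  refine Module.mem_support_iff_exists_annihilator.2
    ⟨⟨x, (Submodule.mem_torsionBySet_iff _ _).2 fun a => (smul_eq_zero_iff a).2 a.2⟩, ?_⟩
  intro a ha
  rw [Submodule.mem_annihilator_span_singleton, Subtype.ext_iff] at ha
  exact hpP ((smul_eq_zero_iff a).1 ha)

lemma exists_isAssociatedPrime_quotSMulTop [Module.Finite R M] {p P : Ideal R} [hP : P.IsPrime]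
    (hp : IsAssociatedPrime p M) (hpP : p ≤ P) {r : R} (hrP : r ∈ P) (hr : IsSMulRegular M r) :
    ∃ q : Ideal R, IsAssociatedPrime q (QuotSMulTop r M) ∧ p < q ∧ q ≤ P := by
  let N := Submodule.torsionBySet R M p
  have hsupp : (⟨P, hP⟩ : PrimeSpectrum R) ∈ Module.support R (QuotSMulTop r N) := by
    rw [Module.support_quotSMulTop]
    exact ⟨mem_support_torsionBySet_of_isAssociatedPrime hp hpP, by simpa using hrP⟩
  obtain ⟨q, hq, hqP⟩ := exists_isAssociatedPrime_of_mem_support hsupp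
  have hannq : Module.annihilator R (QuotSMulTop r N) ≤ q :=
    Submodule.annihilator_top.symm.trans_le hq.annihilator_le
  have hpN : p ≤ Module.annihilator R N := fun a ha =>
    Module.mem_annihilator.2 fun n =>
      Subtype.ext ((Submodule.mem_torsionBySet_iff _ _).1 n.2 ⟨a, ha⟩)
  have hpq : p ≤ q := hpN.trans <|
    (LinearMap.annihilator_le_of_surjective _ (Submodule.mkQ_surjective _)).trans hannq
  have hrq : r ∈ q := hannq (QuotSMulTop.mem_annihilator N r)
  have hrp : r ∉ p := fun h =>
    (biUnion_associatedPrimes_eq_compl_regular R M).subset (Set.mem_biUnion hp h) hr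
  exact ⟨q, hq.map_of_injective _ (quotSMulTop_map_torsionBySet_injective hr p),
    SetLike.lt_iff_le_and_exists.2 ⟨hpq, r, hrq, hrp⟩, hqP⟩

lemma length_le_ringKrullDim_quotient_of_isAssociatedPrime [Module.Finite R M] {p P : Ideal R}
    [P.IsPrime] (hp : IsAssociatedPrime p M) (hpP : p ≤ P) {rs : List R} (hrs : ∀ r ∈ rs, r ∈ P)
    (hreg : IsWeaklyRegular M rs) :
    (rs.length : WithBot ℕ∞) ≤ ringKrullDim (R ⧸ p) := by
  have := hp.isPrime
  induction rs generalizing M p with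
  | nil => simpa using ringKrullDim_nonneg_of_nontrivial (R := R ⧸ p)
  | cons r rs ih =>
    rw [isWeaklyRegular_cons_iff] at hreg
    rw [List.forall_mem_cons] at hrs
    obtain ⟨q, hq, hpq, hqP⟩ := exists_isAssociatedPrime_quotSMulTop hp hpP hrs.1 hreg.1
    calc ((r :: rs).length : WithBot ℕ∞) = rs.length + 1 := by simp
      _ ≤ ringKrullDim (R ⧸ q) + 1 := by gcongr; exact ih hq hqP hrs.2 hreg.2 hq.isPrime
      _ ≤ ringKrullDim (R ⧸ p) := ringKrullDim_quotient_add_one_le_of_lt hpq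

end AssociatedPrimes

section RegularOnQuotient

variable {R : Type*} [CommRing R] {I : Ideal R}

lemma quotient_mk_mem_smul_top {J : Ideal R} {g : R} :
    Ideal.Quotient.mk I g ∈ (J • ⊤ : Submodule R (R ⧸ I)) ↔ g ∈ I ⊔ J := by
  rw [Ideal.smul_top_eq_map, Submodule.restrictScalars_mem, Ideal.Quotient.algebraMap_eq,
    Ideal.mem_quotient_iff_mem_sup, sup_comm]

lemma isWeaklyRegular_quotient_iff {rs : List R} :
    IsWeaklyRegular (R ⧸ I) rs ↔ ∀ i (_ : i < rs.length) (g : R),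
      rs[i] * g ∈ I ⊔ Ideal.ofList (rs.take i) → g ∈ I ⊔ Ideal.ofList (rs.take i) := by
  simp_rw [isWeaklyRegular_iff, isSMulRegular_quotient_iff_mem_of_smul_mem,
    Ideal.Quotient.mk_surjective.forall, ← quotient_mk_mem_smul_top]
  rfl

-- The algebra behind Hartshorne's connectedness theorem: two regular elements of `J₁ ⊔ J₂` force
-- a section of `R/I` defined away from `V(J₁ ⊔ J₂)`, here `f` on `D(J₁)` and `0` on `D(J₂)`,
-- to extend to an element of `R/I`.
lemma exists_glue_of_isWeaklyRegular {J₁ J₂ : Ideal R} {f : R}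
    (hf : ∀ u ∈ J₁, ∀ v ∈ J₂, u * v * f ∈ I) {rs : List R} (hreg : IsWeaklyRegular (R ⧸ I) rs)
    (hlen : 2 ≤ rs.length) (hrs : ∀ r ∈ rs, r ∈ J₁ ⊔ J₂) :
    ∃ g, (∀ u ∈ J₁, u * (f - g) ∈ I) ∧ ∀ v ∈ J₂, v * g ∈ I := by
  obtain ⟨r₁, r₂, l, rfl⟩ : ∃ r₁ r₂ l, rs = r₁ :: r₂ :: l := by
    match rs, hlen with
    | r₁ :: r₂ :: l, _ => exact ⟨r₁, r₂, l, rfl⟩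
  rw [isWeaklyRegular_quotient_iff] at hreg
  have hr₁ := hreg 0 (by simp)
  have hr₂ := hreg 1 (by simp)
  simp only [List.getElem_cons_zero, List.getElem_cons_succ, List.take_zero, List.take_succ_cons,
    Ideal.ofList_nil, Ideal.ofList_singleton, sup_bot_eq] at hr₁ hr₂
  obtain ⟨u₁, hu₁, v₁, hv₁, rfl⟩ := Submodule.mem_sup.1 (hrs r₁ (by simp))
  obtain ⟨u₂, hu₂, v₂, hv₂, rfl⟩ := Submodule.mem_sup.1 (hrs r₂ (by simp))
  have hmem : u₁ * f ∈ I ⊔ Ideal.span {u₁ + v₁} := by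
    apply hr₂
    rw [show (u₂ + v₂) * (u₁ * f) =
      (u₁ * v₂ * f - u₂ * v₁ * f) + (u₁ + v₁) * (u₂ * f) by ring]
    exact Submodule.add_mem_sup (I.sub_mem (hf _ hu₁ _ hv₂) (hf _ hu₂ _ hv₁))
      (Ideal.mul_mem_right _ _ (Ideal.mem_span_singleton_self _))
  obtain ⟨c, hc, _, hgr, hcg⟩ := Submodule.mem_sup.1 hmem
  obtain ⟨g, rfl⟩ := Ideal.mem_span_singleton'.1 hgr
  refine ⟨g, fun u hu => hr₁ _ ?_, fun v hv => hr₁ _ ?_⟩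
  · rw [show (u₁ + v₁) * (u * (f - g)) = u * v₁ * f + u * c by linear_combination (-u) * hcg]
    exact I.add_mem (hf _ hu _ hv₁) (I.mul_mem_left _ hc)
  · rw [show (u₁ + v₁) * (v * g) = u₁ * v * f - v * c by linear_combination v * hcg]
    exact I.sub_mem (hf _ hu₁ _ hv) (I.mul_mem_left _ hc)

lemma mem_sup_iff_map_mem {J : Ideal R} {φ : R →+* R} (hφ : ∀ g, g - φ g ∈ J)
    (hJ : J ≤ RingHom.ker φ) {g : R} : g ∈ I ⊔ J ↔ φ g ∈ I.map φ := by
  constructor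
  · intro hg
    obtain ⟨a, ha, c, hc, rfl⟩ := Submodule.mem_sup.1 hg
    rw [map_add, RingHom.mem_ker.1 (hJ hc), add_zero]
    exact Ideal.mem_map_of_mem φ ha
  · intro hg
    have hmap : I.map φ ≤ I ⊔ J := Ideal.map_le_iff_le_comap.2 fun f hf => by
      rw [Ideal.mem_comap, ← sub_sub_cancel f (φ f)]
      exact sub_mem (Ideal.mem_sup_left hf) (Ideal.mem_sup_right (hφ f))
    rw [← sub_add_cancel g (φ g)]
    exact add_mem (Ideal.mem_sup_right (hφ g)) (hmap hg)

lemma ringKrullDim_quotient_le_of_forall_isPrime {N : WithBot ℕ∞}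
    (h : ∀ p : Ideal R, p.IsPrime → I ≤ p → ringKrullDim (R ⧸ p) ≤ N) :
    ringKrullDim (R ⧸ I) ≤ N := by
  rw [ringKrullDim_quotient]
  refine iSup_le fun l => (?_ : _ ≤ _).trans (h l.head.1.asIdeal l.head.1.isPrime l.head.2)
  rw [ringKrullDim_quotient]
  exact le_iSup_of_le (⟨l.length, fun i => ⟨(l i).1, l.head_le i⟩, l.step⟩ : LTSeries _) le_rfl

end RegularOnQuotient

section PolynomialDimension

variable {K σ τ : Type*} [Field K]

lemma ringKrullDim_quotient_le_card {p : Ideal (MvPolynomial σ K)} (T : Finset σ)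
    (hT : ∀ s ∉ T, X s ∈ p) : ringKrullDim (MvPolynomial σ K ⧸ p) ≤ T.card := by
  let π : MvPolynomial T K →ₐ[K] MvPolynomial σ K ⧸ p :=
    (Ideal.Quotient.mkₐ K p).comp (rename Subtype.val)
  have mk_mem_range (g : MvPolynomial σ K) : Ideal.Quotient.mkₐ K p g ∈ π.range := by
    induction g using MvPolynomial.induction_on with
    | C a => exact ⟨C a, by simp [π]⟩
    | add f g hf hg => rw [map_add]; exact add_mem hf hg
    | mul_X f s hf =>
      rw [map_mul]
      refine mul_mem hf ?_
      by_cases hs : s ∈ T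
      · exact ⟨X ⟨s, hs⟩, by simp [π]⟩
      · have hXs : Ideal.Quotient.mkₐ K p (X s) = 0 := Ideal.Quotient.eq_zero_iff_mem.2 (hT s hs)
        rw [hXs]
        exact zero_mem _
  have hπ : Function.Surjective π.toRingHom :=
    (Ideal.Quotient.mkₐ_surjective K p).forall.2 mk_mem_range
  refine (ringKrullDim_le_of_surjective π.toRingHom hπ).trans_eq ?_
  simp [MvPolynomial.ringKrullDim_of_isNoetherianRing]

lemma card_le_ringKrullDim_quotient [Fintype τ] {f : τ → σ} (hf : Function.Injective f)
    {I : Ideal (MvPolynomial σ K)} (hI : I ≤ RingHom.ker (killCompl (R := K) hf)) :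
    (Fintype.card τ : WithBot ℕ∞) ≤ ringKrullDim (MvPolynomial σ K ⧸ I) := by
  have hsurj : Function.Surjective (Ideal.Quotient.lift I (killCompl (R := K) hf).toRingHom hI) :=
    Ideal.Quotient.lift_surjective_of_surjective _ hI fun g =>
      ⟨rename f g, killCompl_rename_app hf g⟩
  calc (Fintype.card τ : WithBot ℕ∞) = ringKrullDim (MvPolynomial τ K) := by
        simp [MvPolynomial.ringKrullDim_of_isNoetherianRing]
    _ ≤ _ := ringKrullDim_le_of_surjective _ hsurj

end PolynomialDimension

section MonomialIdeals

variable {K σ : Type*} [CommRing K]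

lemma exists_mem_of_support_X_sub_X_mul_subset {U : Set (σ →₀ ℕ)} {a b : σ} (hab : a ≠ b)
    {g : MvPolynomial σ K} (hg : ↑((X b - X a) * g).support ⊆ U) {e : σ →₀ ℕ}
    (he : e ∈ g.support) :
    ∃ u ∈ U, u a ≤ e a ∧ ∀ i, i ≠ a → i ≠ b → u i = e i := by
  classical
  induction hk : e a using Nat.strong_induction_on generalizing e with
  | _ k ih =>
  let e' := e + Finsupp.single b 1
  have he' : ∀ i, i ≠ a → i ≠ b → e' i = e i := fun i _ hib => by simp [e', hib]
  have he'a : e' a = k := by simp [e', hk, hab]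
  by_cases he'U : e' ∈ U
  · exact ⟨e', he'U, he'a.le, he'⟩
  have hcoeff : coeff e g = if a ∈ e'.support then coeff (e' - Finsupp.single a 1) g else 0 := by
    have hzero : coeff e' ((X b - X a) * g) = 0 := by
      by_contra hne
      exact he'U (hg (mem_support_iff.2 hne))
    rw [sub_mul, coeff_sub, coeff_X_mul', coeff_X_mul', sub_eq_zero] at hzero
    simpa [e'] using hzero
  rw [mem_support_iff, hcoeff] at he
  split_ifs at he with ha
  · have hk0 : k ≠ 0 := by rwa [Finsupp.mem_support_iff, he'a] at ha
    obtain ⟨u, huU, hua, hui⟩ := ih (k - 1) (by omega) (mem_support_iff.2 he)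
      (by simp [he'a])
    refine ⟨u, huU, by omega, fun i hia hib => ?_⟩
    rw [hui i hia hib, ← he' i hia hib]
    simp [hia]
  · exact absurd rfl he

lemma support_subset_of_support_X_sub_X_mul_subset {U : Set (σ →₀ ℕ)} {a b : σ} (hab : a ≠ b)
    (hU : ∀ e, ∀ u ∈ U, ∀ u' ∈ U, (∀ i, i ≠ a → i ≠ b → u i = e i ∧ u' i = e i) →
      u a ≤ e a → u' b ≤ e b → e ∈ U)
    {g : MvPolynomial σ K} (hg : ↑((X b - X a) * g).support ⊆ U) : ↑g.support ⊆ U := by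
  intro e he
  obtain ⟨u, huU, hua, hu⟩ := exists_mem_of_support_X_sub_X_mul_subset hab hg he
  obtain ⟨u', huU', hub', hu'⟩ := exists_mem_of_support_X_sub_X_mul_subset hab.symm
    (U := U) (by rwa [← neg_sub, neg_mul, support_neg]) he
  exact hU e u huU u' huU' (fun i hia hib => ⟨hu i hia hib, hu' i hib hia⟩) hua hub'

lemma constantCoeff_eq_zero_of_mul_monomial_mem {S : Set (σ →₀ ℕ)} {e : σ →₀ ℕ}
    (he : monomial e (1 : K) ∉ Ideal.span ((monomial · (1 : K)) '' S)) {s : MvPolynomial σ K}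
    (hs : s * monomial e 1 ∈ Ideal.span ((monomial · (1 : K)) '' S)) :
    constantCoeff s = 0 := by
  classical
  contrapose! he
  rw [mem_ideal_span_monomial_image] at hs ⊢
  intro u hu
  obtain rfl : u = e := Finset.mem_singleton.1 (support_monomial_subset hu)
  refine hs u ?_
  rwa [mem_support_iff, coeff_mul_monomial', if_pos le_rfl, tsub_self, mul_one]

lemma X_mem_idealOfVars (s : σ) : X s ∈ idealOfVars σ K := Ideal.subset_span ⟨s, rfl⟩

lemma mem_idealOfVars_iff_constantCoeff {f : MvPolynomial σ K} :
    f ∈ idealOfVars σ K ↔ constantCoeff f = 0 := by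
  simpa [Finsupp.degree_eq_zero_iff, constantCoeff_eq] using mem_pow_idealOfVars_iff' 1 f

instance idealOfVars_isPrime [IsDomain K] : (idealOfVars σ K).IsPrime := by
  have hker : idealOfVars σ K = RingHom.ker constantCoeff :=
    Ideal.ext fun f => mem_idealOfVars_iff_constantCoeff
  exact hker ▸ RingHom.ker_isPrime _

end MonomialIdeals

section CohenMacaulay

variable {K σ : Type*} [Field K] {I : Ideal (MvPolynomial σ K)}

lemma IsCMQuot.of_isWeaklyRegular (hI : I ≤ idealOfVars σ K) {rs : List (MvPolynomial σ K)}
    (hrs : ∀ r ∈ rs, r ∈ idealOfVars σ K) (hreg : IsWeaklyRegular (MvPolynomial σ K ⧸ I) rs)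
    (hlen : (rs.length : WithBot ℕ∞) = ringKrullDim (MvPolynomial σ K ⧸ I)) : IsCMQuot I := by
  refine ⟨rs, hrs, ⟨hreg, fun htop => ?_⟩, hlen⟩
  have hone : (1 : MvPolynomial σ K) ∈ I ⊔ Ideal.ofList rs :=
    quotient_mk_mem_smul_top.1 (htop ▸ Submodule.mem_top)
  exact idealOfVars_isPrime.ne_top ((Ideal.eq_top_iff_one _).2
    (sup_le hI (Ideal.span_le.2 hrs) hone))

lemma IsCMQuot.ringKrullDim_le_of_colon_le [Finite σ] (hI : IsCMQuot I) {f : MvPolynomial σ K}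
    (hf : I.colon {f} ≤ idealOfVars σ K) :
    ∃ P : Ideal (MvPolynomial σ K), I.colon {f} ≤ P ∧
      ringKrullDim (MvPolynomial σ K ⧸ I) ≤ ringKrullDim (MvPolynomial σ K ⧸ P) := by
  obtain ⟨rs, hrs, hreg, hlen⟩ := hI
  have hcolon : (⊥ : Submodule _ (MvPolynomial σ K ⧸ I)).colon {Ideal.Quotient.mk I f} =
      I.colon {f} := by
    ext s
    rw [Submodule.mem_colon_singleton, Submodule.mem_colon_singleton, Submodule.mem_bot]
    exact Ideal.Quotient.eq_zero_iff_mem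
  obtain ⟨P, hP, hfP, hPm⟩ := exists_isAssociatedPrime_of_colon_le (hcolon.trans_le hf)
  exact ⟨P, hcolon.symm.trans_le hfP, hlen.symm.trans_le
    (length_le_ringKrullDim_quotient_of_isAssociatedPrime hP hPm hrs hreg.1)⟩

end CohenMacaulay

section EdgeCounting

variable {ι : Type*} [Fintype ι]

/-- The numerical condition for `c i` copies of each pendant edge `x_i y_i`, together with `d i`
further copies of each vertex `x_i` of the complete graph, to contain `n` edges: the multiset of
vertices given by `d` must supply `n - ∑ i, c i` disjoint pairs of distinct vertices. -/
def ContainsEdges (n : ℕ) (c d : ι → ℕ) : Prop :=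
  2 * n ≤ 2 * ∑ i, c i + ∑ i, d i ∧ ∀ j, n + d j ≤ ∑ i, c i + ∑ i, d i

lemma exists_sum_eq_of_le_of_le {f₁ f₂ : ι → ℕ} (hf : f₁ ≤ f₂) {m : ℕ} (h₁ : ∑ i, f₁ i ≤ m)
    (h₂ : m ≤ ∑ i, f₂ i) : ∃ g, f₁ ≤ g ∧ g ≤ f₂ ∧ ∑ i, g i = m := by
  obtain ⟨r, rfl⟩ := exists_add_of_le hf
  simp only [Pi.add_apply, Finset.sum_add_distrib] at h₂
  obtain ⟨g, hgr, hg⟩ := Finsupp.exists_le_degree_eq (Finsupp.equivFunOnFinite.symm r)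
    (m - ∑ i, f₁ i) (by simp [Finsupp.degree_eq_sum]; omega)
  rw [Finsupp.degree_eq_sum] at hg
  refine ⟨f₁ + g, le_self_add, add_le_add_right (fun i => hgr i) f₁, ?_⟩
  simp only [Pi.add_apply, Finset.sum_add_distrib]
  omega

lemma add_le_sum_of_ne (f : ι → ℕ) {i j : ι} (hij : i ≠ j) : f i + f j ≤ ∑ l, f l := by
  classical
  rw [← Finset.sum_pair hij]
  exact Finset.sum_le_sum_of_subset (Finset.subset_univ _)

lemma add_add_le_sum_of_ne (f : ι → ℕ) {i j l : ι} (hij : i ≠ j) (hli : l ≠ i) (hlj : l ≠ j) :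
    f i + f j + f l ≤ ∑ k, f k := by
  classical
  have hsum : ∑ k ∈ {i, j, l}, f k = f i + (f j + f l) := by
    rw [Finset.sum_insert (by simp [hij, hli.symm]), Finset.sum_pair hlj.symm]
  rw [add_assoc, ← hsum]
  exact Finset.sum_le_sum_of_subset (Finset.subset_univ _)

lemma exists_ne_forall_le {f : ι → ℕ} (hf : ∑ i, f i ≠ 0) (hlt : ∀ j, f j < ∑ i, f i) :
    ∃ i j, i ≠ j ∧ f i ≠ 0 ∧ f j ≠ 0 ∧ ∀ l, l ≠ i → l ≠ j → f l ≤ f i ∧ f l ≤ f j := by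
  classical
  obtain ⟨i, -, hi⟩ := Finset.exists_max_image _ f (Finset.nonempty_of_sum_ne_zero hf)
  have hsplit := Finset.add_sum_erase _ f (Finset.mem_univ i)
  have hsum : ∑ l ∈ Finset.univ.erase i, f l ≠ 0 := by have := hlt i; omega
  obtain ⟨j, hj, hj_max⟩ := Finset.exists_max_image _ f (Finset.nonempty_of_sum_ne_zero hsum)
  have hfj : f j ≠ 0 := fun h0 =>
    hsum (Finset.sum_eq_zero fun l hl => Nat.le_zero.1 ((hj_max l hl).trans h0.le))
  have hji := hi j (Finset.mem_univ j)
  exact ⟨i, j, (Finset.ne_of_mem_erase hj).symm, by omega, hfj, fun l hli _ =>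
    ⟨hi l (Finset.mem_univ l), hj_max l (Finset.mem_erase.2 ⟨hli, Finset.mem_univ l⟩)⟩⟩

lemma exists_le_balanced {f : ι → ℕ} {p : ι} (hp : 2 * f p ≤ ∑ i, f i) :
    ∃ g ≤ f, g p = f p ∧ ∀ j, 2 * g j ≤ ∑ i, g i := by
  classical
  have hsingle : Pi.single p (f p) ≤ f := update_le_iff.2 ⟨le_rfl, fun _ _ => Nat.zero_le _⟩
  obtain ⟨g, hpg, hgf, hg⟩ := exists_sum_eq_of_le_of_le hsingle (by simp [two_mul]) hp
  have hgp : g p = f p := (hgf p).antisymm (by simpa using hpg p)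
  refine ⟨g, hgf, hgp, fun j => ?_⟩
  obtain rfl | hj := eq_or_ne j p
  · rw [hg, hgp]
  · have := add_le_sum_of_ne g hj
    omega

lemma add_le_add_sum_of_forall_ne_le {n s : ℕ} {d D : ι → ℕ} {j : ι}
    (h : n + d j ≤ s + ∑ i, d i) (hdD : ∀ i ≠ j, d i ≤ D i) : n + D j ≤ s + ∑ i, D i := by
  classical
  rw [← Finset.add_sum_erase _ _ (Finset.mem_univ j)] at h ⊢
  have hsum : ∑ i ∈ Finset.univ.erase j, d i ≤ ∑ i ∈ Finset.univ.erase j, D i :=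
    Finset.sum_le_sum fun i hi => hdD i (Finset.ne_of_mem_erase hi)
  omega

namespace ContainsEdges

variable {n : ℕ} {c d k g h D : ι → ℕ}

lemma zero : ContainsEdges 0 (0 : ι → ℕ) 0 := by simp [ContainsEdges]

-- In a trade, the pendant edges counted by `g` are given up and `x_i` gains two copies for each of
-- them, which is possible when the pendant generator contains `x_i ^ 2`.
lemma two_mul_le_of_trade (hk : ContainsEdges n (k + g) d) (hD : ∀ i, d i + 2 * g i ≤ D i) :
    2 * n ≤ 2 * ∑ i, k i + ∑ i, D i := by
  have hsum := Finset.sum_le_sum fun i (_ : i ∈ Finset.univ) => hD i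
  rw [Finset.sum_add_distrib, ← Finset.mul_sum] at hsum
  have htotal := hk.1
  simp only [Pi.add_apply, Finset.sum_add_distrib] at htotal
  omega

lemma add_le_of_trade (hk : ContainsEdges n (k + g) d) (hD : ∀ i, d i + 2 * g i ≤ D i) {j : ι}
    (hg : 2 * g j ≤ ∑ i, g i) : n + D j ≤ ∑ i, k i + ∑ i, D i := by
  refine add_le_add_sum_of_forall_ne_le (d := fun i => d i + 2 * g i) ?_ fun i _ => hD i
  have hj := hk.2 j
  simp only [Pi.add_apply, Finset.sum_add_distrib, ← Finset.mul_sum] at hj ⊢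
  omega

lemma of_trade (hk : ContainsEdges n (k + g) d) (hD : ∀ i, d i + 2 * g i ≤ D i)
    (hg : ∀ j, 2 * g j ≤ ∑ i, g i) : ContainsEdges n k D :=
  ⟨hk.two_mul_le_of_trade hD, fun j => hk.add_le_of_trade hD (hg j)⟩

lemma of_trade_of_ne {d' : ι → ℕ} {p : ι} (hk : ContainsEdges n (k + g) d)
    (hD : ∀ i, d i + 2 * g i ≤ D i) (hg : ∀ j ≠ p, 2 * g j ≤ ∑ i, g i)
    (hk' : ContainsEdges n (k + h) d') (hD' : ∀ i ≠ p, d' i + h i ≤ D i) (hp : h p = 0) :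
    ContainsEdges n k D := by
  refine ⟨hk.two_mul_le_of_trade hD, fun j => ?_⟩
  obtain rfl | hj := eq_or_ne j p
  · refine add_le_add_sum_of_forall_ne_le (d := fun i => d' i + h i) ?_ hD'
    have hj := hk'.2 j
    simp only [Pi.add_apply, Finset.sum_add_distrib] at hj ⊢
    omega
  · exact hk.add_le_of_trade hD (hg j hj)

-- Only the excess of the first count over the second may be traded away, and at `p` all of it must
-- be. If `p` carries at most half of the excess, a balanced part of it suffices; otherwise all
-- of it is traded, and the inequality at `p` is inherited from the second count.
lemma exists_exchange {a E c' d' : ι → ℕ} (ha : ∀ i, 2 ≤ a i) {p : ι}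
    (hc : ContainsEdges n c d) (hE : ∀ i, a i * c i + d i ≤ E i)
    (hc' : ContainsEdges n c' d') (hE' : ∀ i ≠ p, a i * c' i + d' i ≤ E i) (hp : c' p ≤ c p) :
    ∃ k D, ContainsEdges n k D ∧ (∀ i, a i * k i + D i ≤ E i) ∧ k ≤ c ∧ k p = c' p := by
  have trade {k g d : ι → ℕ} {i : ι} (h : a i * (k + g) i + d i ≤ E i) :
      d i + 2 * g i ≤ E i - a i * k i := by
    have := Nat.mul_le_mul_right (g i) (ha i)
    rw [Pi.add_apply, mul_add] at h
    omega
  have fits {k : ι → ℕ} (hk : k ≤ c) (i : ι) : a i * k i + (E i - a i * k i) ≤ E i :=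
    (add_tsub_cancel_of_le ((Nat.mul_le_mul_left _ (hk i)).trans
      (le_of_add_le_left (hE i)))).le
  obtain hdom | hbal := le_total (∑ i, (c - c') i) (2 * (c - c') p)
  · have hk : c ⊓ c' + (c - c') = c := funext fun i => by
      simp only [Pi.add_apply, Pi.inf_apply, Pi.sub_apply]; omega
    have hk' : c ⊓ c' + (c' - c) = c' := funext fun i => by
      simp only [Pi.add_apply, Pi.inf_apply, Pi.sub_apply]; omega
    have hg (j) (hj : j ≠ p) : 2 * (c - c') j ≤ ∑ i, (c - c') i := by
      have := add_le_sum_of_ne (c - c') hj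
      omega
    have hD' (i) (hi : i ≠ p) : d' i + (c' - c) i ≤ E i - a i * (c ⊓ c') i := by
      have := trade (hk'.symm ▸ hE' i hi)
      omega
    exact ⟨c ⊓ c', fun i => E i - a i * (c ⊓ c') i, of_trade_of_ne (hk.symm ▸ hc)
      (fun i => trade (hk.symm ▸ hE i)) hg (hk'.symm ▸ hc') hD' (tsub_eq_zero_of_le hp),
      fits inf_le_left, inf_le_left, inf_eq_right.2 hp⟩
  · obtain ⟨g, hgc, hgp, hg⟩ := exists_le_balanced hbal
    have hk : c - g + g = c := tsub_add_cancel_of_le (hgc.trans tsub_le_self)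
    refine ⟨c - g, fun i => E i - a i * (c - g) i, of_trade (hk.symm ▸ hc)
      (fun i => trade (hk.symm ▸ hE i)) hg, fits tsub_le_self, tsub_le_self, ?_⟩
    rw [Pi.sub_apply, hgp, Pi.sub_apply, tsub_tsub_cancel_of_le hp]

variable [DecidableEq ι]

lemma add_single_left (h : ContainsEdges n c d) (i : ι) :
    ContainsEdges (n + 1) (c + Pi.single i 1) d := by
  simp only [ContainsEdges, Pi.add_apply, Finset.sum_add_distrib, Finset.sum_pi_single',
    Finset.mem_univ, if_true]
  exact ⟨by have := h.1; omega, fun j => by have := h.2 j; omega⟩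

lemma add_single_add_single (h : ContainsEdges n c d) {i j : ι} (hij : i ≠ j) :
    ContainsEdges (n + 1) c (d + (Pi.single i 1 + Pi.single j 1)) := by
  simp only [ContainsEdges, Pi.add_apply, Finset.sum_add_distrib, Finset.sum_pi_single',
    Finset.mem_univ, if_true]
  refine ⟨by have := h.1; omega, fun l => ?_⟩
  have hl := h.2 l
  simp only [Pi.single_apply]
  grind

lemma exists_eq_add_single_left (h : ContainsEdges (n + 1) c d) (hc : c ≠ 0) :
    ∃ i c', c = c' + Pi.single i 1 ∧ ContainsEdges n c' d := by
  obtain ⟨i, hi⟩ := Function.ne_iff.1 hc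
  obtain ⟨c', rfl⟩ : ∃ c', c = c' + Pi.single i 1 :=
    ⟨c - Pi.single i 1, (tsub_add_cancel_of_le <|
      update_le_iff.2 ⟨Nat.one_le_iff_ne_zero.2 hi, fun _ _ => Nat.zero_le _⟩).symm⟩
  refine ⟨i, c', rfl, ?_⟩
  simp only [ContainsEdges, Pi.add_apply, Finset.sum_add_distrib, Finset.sum_pi_single',
    Finset.mem_univ, if_true] at h
  exact ⟨by have := h.1; omega, fun j => by have := h.2 j; omega⟩

lemma exists_eq_add_single_add_single (h : ContainsEdges (n + 1) 0 d) :
    ∃ i j d', i ≠ j ∧ d = d' + (Pi.single i 1 + Pi.single j 1) ∧ ContainsEdges n 0 d' := by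
  simp only [ContainsEdges, Pi.zero_apply, Finset.sum_const_zero] at h ⊢
  obtain ⟨htotal, hmax⟩ := h
  obtain ⟨i, j, hij, hi, hj, hothers⟩ := exists_ne_forall_le (f := d) (by omega)
    fun j => by have := hmax j; omega
  obtain ⟨d', hd⟩ : ∃ d', d = d' + (Pi.single i 1 + Pi.single j 1) := by
    refine ⟨d - (Pi.single i 1 + Pi.single j 1), (tsub_add_cancel_of_le fun l => ?_).symm⟩
    simp only [Pi.add_apply, Pi.single_apply]
    grind
  have hsum : ∑ l, d l = ∑ l, d' l + 2 := by simp [hd, Finset.sum_add_distrib]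
  have d_eq (l) (hli : l ≠ i) (hlj : l ≠ j) : d l = d' l := by simp [hd, hli, hlj]
  have d_eq_add_one (l) (hl : l = i ∨ l = j) : d l = d' l + 1 := by
    obtain rfl | rfl := hl <;> simp [hd, hij, hij.symm]
  refine ⟨i, j, d', hij, hd, by omega, fun l => ?_⟩
  have hl := hmax l
  by_cases hlij : l = i ∨ l = j
  · have := d_eq_add_one l hlij
    omega
  · obtain ⟨hli, hlj⟩ := not_or.1 hlij
    have hthree := add_add_le_sum_of_ne d hij hli hlj
    have hle := hothers l hli hlj
    have hdl := d_eq l hli hlj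
    have hdi := hmax i
    omega

end ContainsEdges

end EdgeCounting

section WhiskerIdeal

variable {ι : Type*}

/-- The edge ideal of the complete graph on the vertices `x_i = inl i` with a pendant vertex
`y_i = inr i` attached to each of them, where `x_i y_i` is replaced by `x_i ^ a i * y_i ^ b i`.
Unlike the ideals with `a = b`, these are stable under the substitution `y_i = x_i`, which amounts
to replacing `(a i, b i)` by `(a i + b i, 0)`. -/
noncomputable def whiskerIdeal (K : Type*) [CommSemiring K] (a b : ι → ℕ) :
    Ideal (MvPolynomial (ι ⊕ ι) K) :=
  Ideal.span ({f | ∃ i j, i ≠ j ∧ f = X (inl i) * X (inl j)} ∪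
    {f | ∃ i, f = X (inl i) ^ a i * X (inr i) ^ b i})

/-- The exponents of the monomials in the `n`-th power of `whiskerIdeal K a b`: they are the
multiples of `∏ i, (x_i ^ a i * y_i ^ b i) ^ c i * x_i ^ d i` with `ContainsEdges n c d`. -/
def whiskerPowExponents [Fintype ι] (a b : ι → ℕ) (n : ℕ) : Set (ι ⊕ ι →₀ ℕ) :=
  {e | ∃ c d, ContainsEdges n c d ∧ (∀ i, a i * c i + d i ≤ e (inl i)) ∧
    ∀ i, b i * c i ≤ e (inr i)}

section Generators

variable {K : Type*} [CommSemiring K] {a b : ι → ℕ}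

lemma X_mul_X_mem_whiskerIdeal {i j : ι} (hij : i ≠ j) :
    X (inl i) * X (inl j) ∈ whiskerIdeal K a b :=
  Ideal.subset_span (.inl ⟨i, j, hij, rfl⟩)

lemma X_pow_mul_X_pow_mem_whiskerIdeal (i : ι) :
    X (inl i) ^ a i * X (inr i) ^ b i ∈ whiskerIdeal K a b :=
  Ideal.subset_span (.inr ⟨i, rfl⟩)

lemma whiskerIdeal_le {J : Ideal (MvPolynomial (ι ⊕ ι) K)}
    (hedge : ∀ i j, i ≠ j → X (inl i) * X (inl j) ∈ J)
    (hpendant : ∀ i, X (inl i) ^ a i * X (inr i) ^ b i ∈ J) : whiskerIdeal K a b ≤ J := by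
  rw [whiskerIdeal, Ideal.span_le, Set.union_subset_iff]
  constructor
  · rintro _ ⟨i, j, hij, rfl⟩
    exact hedge i j hij
  · rintro _ ⟨i, rfl⟩
    exact hpendant i

end Generators

section Exponents

/-- The exponent of the edge monomial `x_i * x_j`. -/
noncomputable def edgeExponent (i j : ι) : ι ⊕ ι →₀ ℕ :=
  Finsupp.single (inl i) 1 + Finsupp.single (inl j) 1

/-- The exponent of the pendant edge monomial `x_i ^ a i * y_i ^ b i`. -/
noncomputable def pendantExponent (a b : ι → ℕ) (i : ι) : ι ⊕ ι →₀ ℕ :=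
  Finsupp.single (inl i) (a i) + Finsupp.single (inr i) (b i)

variable {a b : ι → ℕ}

lemma edgeExponent_inr (i j l : ι) : edgeExponent i j (inr l) = 0 := by
  simp [edgeExponent]

section Apply

variable [DecidableEq ι]

lemma edgeExponent_inl (i j l : ι) :
    edgeExponent i j (inl l) = (Pi.single i 1 + Pi.single j 1 : ι → ℕ) l := by
  simp [edgeExponent, Finsupp.single_apply, Pi.single_apply, eq_comm]

lemma pendantExponent_inl (i l : ι) :
    pendantExponent a b i (inl l) = a l * (Pi.single i 1 : ι → ℕ) l := by
  obtain rfl | hl := eq_or_ne l i <;> simp [pendantExponent, *, Ne.symm]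

lemma pendantExponent_inr (i l : ι) :
    pendantExponent a b i (inr l) = b l * (Pi.single i 1 : ι → ℕ) l := by
  obtain rfl | hl := eq_or_ne l i <;> simp [pendantExponent, *, Ne.symm]

end Apply

section Monomial

variable {K : Type*} [CommSemiring K]

lemma monomial_edgeExponent (i j : ι) :
    monomial (edgeExponent i j) (1 : K) = X (inl i) * X (inl j) := by
  rw [edgeExponent, ← mul_one (1 : K), ← monomial_mul, X, X]

lemma monomial_pendantExponent (i : ι) :
    monomial (pendantExponent a b i) (1 : K) = X (inl i) ^ a i * X (inr i) ^ b i := by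
  rw [pendantExponent, ← mul_one (1 : K), ← monomial_mul, X_pow_eq_monomial, X_pow_eq_monomial]

end Monomial

variable [Fintype ι] {n : ℕ} {e : ι ⊕ ι →₀ ℕ}

lemma whiskerPowExponents_of_le {e' : ι ⊕ ι →₀ ℕ} (he : e ∈ whiskerPowExponents a b n)
    (hle : e ≤ e') : e' ∈ whiskerPowExponents a b n :=
  let ⟨c, d, hcd, hx, hy⟩ := he
  ⟨c, d, hcd, fun i => (hx i).trans (hle _), fun i => (hy i).trans (hle _)⟩

lemma add_edgeExponent_mem_whiskerPowExponents (he : e ∈ whiskerPowExponents a b n) {i j : ι}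
    (hij : i ≠ j) : e + edgeExponent i j ∈ whiskerPowExponents a b (n + 1) := by
  classical
  obtain ⟨c, d, hcd, hx, hy⟩ := he
  refine ⟨c, _, hcd.add_single_add_single hij, fun l => ?_, fun l => le_add_of_le_left (hy l)⟩
  rw [Finsupp.add_apply, edgeExponent_inl, Pi.add_apply, ← add_assoc]
  exact add_le_add_left (hx l) _

lemma add_pendantExponent_mem_whiskerPowExponents (he : e ∈ whiskerPowExponents a b n) (i : ι) :
    e + pendantExponent a b i ∈ whiskerPowExponents a b (n + 1) := by
  classical
  obtain ⟨c, d, hcd, hx, hy⟩ := he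
  refine ⟨_, d, hcd.add_single_left i, fun l => ?_, fun l => ?_⟩
  · rw [Finsupp.add_apply, pendantExponent_inl, Pi.add_apply, mul_add, add_right_comm]
    exact add_le_add_left (hx l) _
  · rw [Finsupp.add_apply, pendantExponent_inr, Pi.add_apply, mul_add]
    exact add_le_add_left (hy l) _

lemma exists_eq_add_of_mem_whiskerPowExponents (he : e ∈ whiskerPowExponents a b (n + 1)) :
    ∃ u ∈ whiskerPowExponents a b n,
      (∃ i j, i ≠ j ∧ e = u + edgeExponent i j) ∨ ∃ i, e = u + pendantExponent a b i := by
  classical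
  obtain ⟨c, d, hcd, hx, hy⟩ := he
  obtain rfl | hc := eq_or_ne c 0
  · obtain ⟨i, j, d', hij, rfl, hd'⟩ := hcd.exists_eq_add_single_add_single
    simp only [Pi.zero_apply, mul_zero, zero_add, Pi.add_apply d', ← edgeExponent_inl] at hx
    obtain ⟨u, rfl⟩ : ∃ u, e = u + edgeExponent i j := by
      refine ⟨e - edgeExponent i j, (tsub_add_cancel_of_le ?_).symm⟩
      rintro (l | l)
      · exact le_of_add_le_right (hx l)
      · simp [edgeExponent_inr]
    exact ⟨u, ⟨0, d', hd', fun l => by simpa using hx l, by simp⟩, .inl ⟨i, j, hij, rfl⟩⟩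
  · obtain ⟨i, c', rfl, hc'⟩ := hcd.exists_eq_add_single_left hc
    simp only [Pi.add_apply, mul_add, add_right_comm, ← pendantExponent_inl (b := b)] at hx
    simp only [Pi.add_apply, mul_add, ← pendantExponent_inr (a := a)] at hy
    obtain ⟨u, rfl⟩ : ∃ u, e = u + pendantExponent a b i := by
      refine ⟨e - pendantExponent a b i, (tsub_add_cancel_of_le ?_).symm⟩
      rintro (l | l)
      · exact le_of_add_le_right (hx l)
      · exact le_of_add_le_right (hy l)
    exact ⟨u, ⟨c', d, hc', fun l => le_of_add_le_add_right (hx l),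
      fun l => le_of_add_le_add_right (hy l)⟩, .inr ⟨i, rfl⟩⟩

end Exponents

section Powers

variable {K : Type*} [CommSemiring K] [Fintype ι] {a b : ι → ℕ} {n : ℕ}

lemma monomial_mem_whiskerIdeal_pow {e : ι ⊕ ι →₀ ℕ} (he : e ∈ whiskerPowExponents a b n) :
    monomial e (1 : K) ∈ whiskerIdeal K a b ^ n := by
  induction n generalizing e with
  | zero => simp
  | succ n ih =>
    obtain ⟨u, hu, ⟨i, j, hij, rfl⟩ | ⟨i, rfl⟩⟩ := exists_eq_add_of_mem_whiskerPowExponents he <;>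
      rw [← mul_one (1 : K), ← monomial_mul, pow_succ]
    · exact Ideal.mul_mem_mul (ih hu) (monomial_edgeExponent (K := K) i j ▸
        X_mul_X_mem_whiskerIdeal hij)
    · exact Ideal.mul_mem_mul (ih hu) (monomial_pendantExponent (K := K) i ▸
        X_pow_mul_X_pow_mem_whiskerIdeal i)

lemma whiskerIdeal_pow_le_span :
    whiskerIdeal K a b ^ n ≤ Ideal.span ((monomial · 1) '' whiskerPowExponents a b n) := by
  induction n with
  | zero =>
    have hzero : (0 : ι ⊕ ι →₀ ℕ) ∈ whiskerPowExponents a b 0 := ⟨0, 0, .zero, by simp, by simp⟩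
    rw [pow_zero, Ideal.one_eq_top, top_le_iff, Ideal.eq_top_iff_one]
    exact Ideal.subset_span ⟨0, hzero, rfl⟩
  | succ n ih =>
    refine (pow_succ _ _).trans_le ((Ideal.mul_mono_left ih).trans ?_)
    rw [whiskerIdeal, Ideal.span_mul_span', Ideal.span_le, Set.mul_subset_iff]
    rintro _ ⟨e, he, rfl⟩ _ (⟨i, j, hij, rfl⟩ | ⟨i, rfl⟩)
    · rw [← monomial_edgeExponent, monomial_mul, one_mul]
      exact Ideal.subset_span ⟨_, add_edgeExponent_mem_whiskerPowExponents he hij, rfl⟩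
    · rw [← monomial_pendantExponent, monomial_mul, one_mul]
      exact Ideal.subset_span ⟨_, add_pendantExponent_mem_whiskerPowExponents he i, rfl⟩

lemma whiskerIdeal_pow_eq_span :
    whiskerIdeal K a b ^ n = Ideal.span ((monomial · 1) '' whiskerPowExponents a b n) :=
  whiskerIdeal_pow_le_span.antisymm <| Ideal.span_le.2 <|
    Set.image_subset_iff.2 fun _ => monomial_mem_whiskerIdeal_pow

lemma mem_whiskerIdeal_pow_iff {f : MvPolynomial (ι ⊕ ι) K} :
    f ∈ whiskerIdeal K a b ^ n ↔ ↑f.support ⊆ whiskerPowExponents a b n := by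
  rw [whiskerIdeal_pow_eq_span, mem_ideal_span_monomial_image]
  exact ⟨fun h e he => let ⟨u, hu, hue⟩ := h e he; whiskerPowExponents_of_le hu hue,
    fun h e he => ⟨e, h he, le_rfl⟩⟩

end Powers

section Dimension

variable {K : Type*} [Field K] {a b : ι → ℕ} {n : ℕ}

lemma whiskerIdeal_pow_le_idealOfVars (ha : ∀ i, a i ≠ 0) (hn : n ≠ 0) :
    whiskerIdeal K a b ^ n ≤ idealOfVars (ι ⊕ ι) K :=
  (Ideal.pow_le_self hn).trans <| whiskerIdeal_le
    (fun i _ _ => Ideal.mul_mem_right _ _ (X_mem_idealOfVars (inl i)))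
    fun i => Ideal.mul_mem_right _ _ (Ideal.pow_mem_of_mem _ (X_mem_idealOfVars (inl i)) _
      (Nat.pos_of_ne_zero (ha i)))

variable [Fintype ι]

lemma ringKrullDim_quotient_whiskerIdeal_pow_le :
    ringKrullDim (MvPolynomial (ι ⊕ ι) K ⧸ whiskerIdeal K a b ^ n) ≤ Fintype.card ι := by
  classical
  refine ringKrullDim_quotient_le_of_forall_isPrime fun P hP hle => ?_
  have hor (i : ι) : X (inl i) ∈ P ∨ X (inr i) ∈ P :=
    (hP.mem_or_mem (hP.le_of_pow_le hle (X_pow_mul_X_pow_mem_whiskerIdeal i))).imp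
      (hP.mem_of_pow_mem _) (hP.mem_of_pow_mem _)
  let T : Finset (ι ⊕ ι) := Finset.univ.image fun i => if X (inl i) ∈ P then inr i else inl i
  have hT (i : ι) : (if X (inl i) ∈ P then inr i else inl i) ∈ T :=
    Finset.mem_image_of_mem _ (Finset.mem_univ i)
  refine (ringKrullDim_quotient_le_card T ?_).trans (by exact_mod_cast Finset.card_image_le)
  rintro (i | i) hi
  · by_contra hx
    exact hi (by simpa [hx] using hT i)
  · exact (hor i).resolve_left fun hx => hi (by simpa [hx] using hT i)

lemma ringKrullDim_quotient_whiskerIdeal_pow (ha : ∀ i, a i ≠ 0) (hn : n ≠ 0) :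
    ringKrullDim (MvPolynomial (ι ⊕ ι) K ⧸ whiskerIdeal K a b ^ n) = Fintype.card ι := by
  refine ringKrullDim_quotient_whiskerIdeal_pow_le.antisymm
    (card_le_ringKrullDim_quotient inr_injective ((Ideal.pow_le_self hn).trans ?_))
  have hkill (i : ι) : killCompl (R := K) (inr_injective (α := ι) (β := ι)) (X (inl i)) = 0 := by
    simp [killCompl]
  refine whiskerIdeal_le (fun i j _ => ?_) fun i => ?_ <;>
    simp [RingHom.mem_ker, hkill, ha]

end Dimension

section Sufficiency

variable {K : Type*} [CommRing K]

lemma mem_whiskerIdeal_pow_of_X_sub_X_mul_mem [Finite ι] {a b : ι → ℕ} (ha : ∀ i, 2 ≤ a i)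
    {n : ℕ} (p : ι) {g : MvPolynomial (ι ⊕ ι) K}
    (hg : (X (inr p) - X (inl p)) * g ∈ whiskerIdeal K a b ^ n) :
    g ∈ whiskerIdeal K a b ^ n := by
  cases nonempty_fintype ι
  rw [mem_whiskerIdeal_pow_iff] at hg ⊢
  refine support_subset_of_support_X_sub_X_mul_subset inl_ne_inr ?_ hg
  rintro e u ⟨c, d, hcd, hx, hy⟩ u' ⟨c', d', hcd', hx', hy'⟩ hagree hu hu'
  have hxe (i) : a i * c i + d i ≤ e (inl i) := by
    obtain rfl | hi := eq_or_ne i p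
    · exact (hx i).trans hu
    · exact (hagree (inl i) (by simpa) (by simp)).1 ▸ hx i
  have hxe' (i) (hi : i ≠ p) : a i * c' i + d' i ≤ e (inl i) :=
    (hagree (inl i) (by simpa) (by simp)).2 ▸ hx' i
  have hye (i) (hi : i ≠ p) : b i * c i ≤ e (inr i) :=
    (hagree (inr i) (by simp) (by simpa)).1 ▸ hy i
  have hyp : b p * c' p ≤ e (inr p) := (hy' p).trans hu'
  have of_le {k D : ι → ℕ} (hk : ContainsEdges n k D) (hkD : ∀ i, a i * k i + D i ≤ e (inl i))
      (hkc : k ≤ c) (hkp : k p ≤ c' p) : e ∈ whiskerPowExponents a b n := by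
    refine ⟨k, D, hk, hkD, fun i => ?_⟩
    obtain rfl | hi := eq_or_ne i p
    · exact (Nat.mul_le_mul_left _ hkp).trans hyp
    · exact (Nat.mul_le_mul_left _ (hkc i)).trans (hye i hi)
  obtain hp | hp := le_total (c p) (c' p)
  · exact of_le hcd hxe le_rfl hp
  · obtain ⟨k, D, hk, hkD, hkc, hkp⟩ := hcd.exists_exchange ha hxe hcd' hxe' hp
    exact of_le hk hkD hkc hkp.le

open scoped Classical in
/-- The substitution `y_i = x_i` for `i ∈ S`, whose kernel is generated by the elements
`y_i - x_i` with `i ∈ S`. -/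
noncomputable def collapseWhiskers (K : Type*) [CommSemiring K] (S : Set ι) :
    MvPolynomial (ι ⊕ ι) K →ₐ[K] MvPolynomial (ι ⊕ ι) K :=
  rename (Sum.elim inl fun i => if i ∈ S then inl i else inr i)

variable (S : Set ι)

lemma collapseWhiskers_X_inl (i : ι) : collapseWhiskers K S (X (inl i)) = X (inl i) := by
  simp [collapseWhiskers]

variable {S}

lemma collapseWhiskers_X_inr_of_mem {i : ι} (hi : i ∈ S) :
    collapseWhiskers K S (X (inr i)) = X (inl i) := by
  simp [collapseWhiskers, hi]

lemma collapseWhiskers_X_inr_of_notMem {i : ι} (hi : i ∉ S) :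
    collapseWhiskers K S (X (inr i)) = X (inr i) := by
  simp [collapseWhiskers, hi]

lemma sub_collapseWhiskers_mem {J : Ideal (MvPolynomial (ι ⊕ ι) K)}
    (hJ : ∀ i ∈ S, X (inr i) - X (inl i) ∈ J) (g : MvPolynomial (ι ⊕ ι) K) :
    g - collapseWhiskers K S g ∈ J := by
  have hcomp : (Ideal.Quotient.mkₐ K J).comp (collapseWhiskers K S) = Ideal.Quotient.mkₐ K J := by
    ext (i | i)
    · simp [collapseWhiskers_X_inl]
    · by_cases hi : i ∈ S
      · simpa [collapseWhiskers_X_inr_of_mem hi] using (Ideal.Quotient.eq.2 (hJ i hi)).symm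
      · simp [collapseWhiskers_X_inr_of_notMem hi]
  exact Ideal.Quotient.eq.1 (AlgHom.congr_fun hcomp g).symm

lemma map_collapseWhiskers_whiskerIdeal (a b : ι → ℕ) [DecidablePred (· ∈ S)] :
    (whiskerIdeal K a b).map (collapseWhiskers K S) =
      whiskerIdeal K (S.piecewise (a + b) a) (S.piecewise 0 b) := by
  have hpendant (i : ι) : collapseWhiskers K S (X (inl i) ^ a i * X (inr i) ^ b i) =
      X (inl i) ^ S.piecewise (a + b) a i * X (inr i) ^ S.piecewise (0 : ι → ℕ) b i := by
    by_cases hi : i ∈ S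
    · simp [hi, collapseWhiskers_X_inl, collapseWhiskers_X_inr_of_mem, pow_add]
    · simp [hi, collapseWhiskers_X_inl, collapseWhiskers_X_inr_of_notMem]
  refine le_antisymm (Ideal.map_le_iff_le_comap.2 (whiskerIdeal_le (fun i j hij => ?_)
    fun i => ?_)) (whiskerIdeal_le (fun i j hij => ?_) fun i => ?_)
  · rw [Ideal.mem_comap, map_mul, collapseWhiskers_X_inl, collapseWhiskers_X_inl]
    exact X_mul_X_mem_whiskerIdeal hij
  · rw [Ideal.mem_comap, hpendant]
    exact X_pow_mul_X_pow_mem_whiskerIdeal i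
  · rw [← collapseWhiskers_X_inl S i, ← collapseWhiskers_X_inl S j, ← map_mul]
    exact Ideal.mem_map_of_mem _ (X_mul_X_mem_whiskerIdeal hij)
  · rw [← hpendant]
    exact Ideal.mem_map_of_mem _ (X_pow_mul_X_pow_mem_whiskerIdeal i)

lemma mem_sup_ofList_map_iff {I : Ideal (MvPolynomial (ι ⊕ ι) K)} {l : List ι}
    {g : MvPolynomial (ι ⊕ ι) K} :
    g ∈ I ⊔ Ideal.ofList (l.map fun i => X (inr i) - X (inl i)) ↔
      collapseWhiskers K {i | i ∈ l} g ∈ I.map (collapseWhiskers K {i | i ∈ l}) := by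
  refine mem_sup_iff_map_mem (φ := (collapseWhiskers K {i | i ∈ l}).toRingHom)
    (sub_collapseWhiskers_mem fun i hi => ?_) (Ideal.span_le.2 fun r hr => ?_)
  · exact Ideal.subset_span (Set.mem_ofPred.2 (List.mem_map_of_mem hi))
  · obtain ⟨i, hi, rfl⟩ := List.mem_map.1 hr
    have hzero : collapseWhiskers K {i | i ∈ l} (X (inr i) - X (inl i)) = 0 := by
      rw [map_sub, collapseWhiskers_X_inr_of_mem (Set.mem_ofPred.2 hi), collapseWhiskers_X_inl,
        sub_self]
    exact hzero

lemma isWeaklyRegular_whiskerIdeal_pow [Finite ι] {a b : ι → ℕ} (ha : ∀ i, 2 ≤ a i) (n : ℕ)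
    {l : List ι} (hl : l.Nodup) :
    IsWeaklyRegular (MvPolynomial (ι ⊕ ι) K ⧸ whiskerIdeal K a b ^ n)
      (l.map fun i => (X (inr i) - X (inl i) : MvPolynomial (ι ⊕ ι) K)) := by
  classical
  refine isWeaklyRegular_quotient_iff.2 fun k hk g hg => ?_
  rw [List.length_map] at hk
  have hkl : l[k] ∉ {i | i ∈ l.take k} := fun hmem => by
    obtain ⟨j, hj, hjk⟩ := List.mem_take_iff_getElem.1 hmem
    have := (hl.getElem_inj_iff).1 hjk
    omega
  have hweights (i) : 2 ≤ ({i | i ∈ l.take k} : Set ι).piecewise (a + b) a i :=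
    Set.le_piecewise (fun i _ => le_add_of_le_left (ha i)) (fun i _ => ha i) i
  rw [← List.map_take, mem_sup_ofList_map_iff, Ideal.map_pow,
    map_collapseWhiskers_whiskerIdeal] at hg ⊢
  rw [List.getElem_map, map_mul, map_sub, collapseWhiskers_X_inl,
    collapseWhiskers_X_inr_of_notMem hkl] at hg
  exact mem_whiskerIdeal_pow_of_X_sub_X_mul_mem hweights l[k] hg

end Sufficiency

lemma isCMQuot_whiskerIdeal_pow {K : Type*} [Field K] [Finite ι] {a b : ι → ℕ}
    (ha : ∀ i, 2 ≤ a i) {n : ℕ} (hn : n ≠ 0) : IsCMQuot (whiskerIdeal K a b ^ n) := by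
  cases nonempty_fintype ι
  have ha_ne (i) : a i ≠ 0 := by have := ha i; omega
  refine .of_isWeaklyRegular (whiskerIdeal_pow_le_idealOfVars ha_ne hn) ?_
    (isWeaklyRegular_whiskerIdeal_pow ha n (Finset.nodup_toList Finset.univ)) ?_
  · simp only [List.mem_map]
    rintro _ ⟨i, -, rfl⟩
    exact sub_mem (X_mem_idealOfVars _) (X_mem_idealOfVars _)
  · rw [ringKrullDim_quotient_whiskerIdeal_pow ha_ne hn, List.length_map, Finset.length_toList,
      Finset.card_univ]

section Necessity

variable {K : Type*} [Field K] {a b : ι → ℕ} {p q : ι}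

lemma whiskerIdeal_sq_le_idealOfVars_pow_four (hab : ∀ i, 2 ≤ a i + b i) :
    whiskerIdeal K a b ^ 2 ≤ idealOfVars (ι ⊕ ι) K ^ 4 := by
  have hle : whiskerIdeal K a b ≤ idealOfVars (ι ⊕ ι) K ^ 2 := by
    refine whiskerIdeal_le (fun i j _ => ?_) fun i => Ideal.pow_le_pow_right (hab i) ?_
    · rw [sq]
      exact Ideal.mul_mem_mul (X_mem_idealOfVars _) (X_mem_idealOfVars _)
    · rw [pow_add]
      exact Ideal.mul_mem_mul (Ideal.pow_mem_pow (X_mem_idealOfVars _) _)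
        (Ideal.pow_mem_pow (X_mem_idealOfVars _) _)
  simpa [← pow_mul] using Ideal.pow_right_mono hle 2

lemma span_pair_mul_span_pair_le_colon_whiskerIdeal_sq (hpq : p ≠ q) :
    Ideal.span {X (inl q), X (inr p)} * Ideal.span {X (inl p), X (inr q)} ≤
      (whiskerIdeal K (1 : ι → ℕ) 1 ^ 2).colon {X (inl p) * X (inl q)} := by
  have hedge : X (inl p) * X (inl q) ∈ whiskerIdeal K (1 : ι → ℕ) 1 := X_mul_X_mem_whiskerIdeal hpq
  have hpendant (i : ι) : X (inl i) * X (inr i) ∈ whiskerIdeal K (1 : ι → ℕ) 1 := by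
    simpa using X_pow_mul_X_pow_mem_whiskerIdeal (K := K) (a := 1) (b := 1) i
  rw [Ideal.span_pair_mul_span_pair, Ideal.span_le]
  simp only [Set.insert_subset_iff, Set.singleton_subset_iff, SetLike.mem_coe,
    Submodule.mem_colon_singleton, smul_eq_mul, sq]
  refine ⟨?_, ?_, ?_, ?_⟩
  · exact Ideal.mul_mem_mul (X_mul_X_mem_whiskerIdeal hpq.symm) hedge
  · exact Ideal.mul_mem_mul (hpendant q) hedge
  · rw [mul_comm (X (inr p))]
    exact Ideal.mul_mem_mul (hpendant p) hedge
  · rw [mul_mul_mul_comm, mul_comm (X (inr p)), mul_comm (X (inr q))]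
    exact Ideal.mul_mem_mul (hpendant p) (hpendant q)

lemma idealOfVars_le_span_pair_sup_span_pair (hall : ∀ i, i = p ∨ i = q) :
    idealOfVars (ι ⊕ ι) K ≤
      Ideal.span {X (inl q), X (inr p)} ⊔ Ideal.span {X (inl p), X (inr q)} := by
  rw [idealOfVars, ← Ideal.span_union]
  refine Ideal.span_mono ?_
  rintro _ ⟨i | i, rfl⟩ <;> obtain rfl | rfl := hall i <;> simp

lemma exists_glue_whiskerIdeal_one_sq (hpq : p ≠ q) (hall : ∀ i, i = p ∨ i = q)
    (hcm : IsCMQuot (whiskerIdeal K (1 : ι → ℕ) 1 ^ 2)) :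
    ∃ g, X (inl q) * (X (inl p) * X (inl q) - g) ∈ whiskerIdeal K (1 : ι → ℕ) 1 ^ 2 ∧
      X (inl p) * g ∈ whiskerIdeal K (1 : ι → ℕ) 1 ^ 2 := by
  have : Finite ι := Finite.of_finite_univ ((Set.toFinite {p, q}).subset fun i _ => hall i)
  cases nonempty_fintype ι
  obtain ⟨rs, hrs, hreg, hlen⟩ := hcm
  have hlen_two : 2 ≤ rs.length := by
    have hcard : (rs.length : WithBot ℕ∞) = Fintype.card ι :=
      hlen.trans (ringKrullDim_quotient_whiskerIdeal_pow (fun _ => one_ne_zero) two_ne_zero)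
    have : rs.length = Fintype.card ι := by exact_mod_cast hcard
    have := Fintype.one_lt_card_iff.2 ⟨p, q, hpq⟩
    omega
  obtain ⟨g, hg₁, hg₂⟩ := exists_glue_of_isWeaklyRegular
    (fun u hu v hv => Submodule.mem_colon_singleton.1
      (span_pair_mul_span_pair_le_colon_whiskerIdeal_sq hpq (Ideal.mul_mem_mul hu hv)))
    hreg.1 hlen_two fun r hr => idealOfVars_le_span_pair_sup_span_pair hall (hrs r hr)
  exact ⟨g, hg₁ _ (Ideal.subset_span (by simp)), hg₂ _ (Ideal.subset_span (by simp))⟩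

lemma not_isCMQuot_whiskerIdeal_one_sq (hpq : p ≠ q) (hall : ∀ i, i = p ∨ i = q) :
    ¬ IsCMQuot (whiskerIdeal K (1 : ι → ℕ) 1 ^ 2) := by
  classical
  intro hcm
  obtain ⟨g, hqg, hpg⟩ := exists_glue_whiskerIdeal_one_sq hpq hall hcm
  have coeff_eq_zero {s : ι ⊕ ι} {f : MvPolynomial (ι ⊕ ι) K}
      (hf : X s * f ∈ whiskerIdeal K (1 : ι → ℕ) 1 ^ 2) : coeff (edgeExponent p q) f = 0 := by
    have := (mem_pow_idealOfVars_iff' _ _).1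
      (whiskerIdeal_sq_le_idealOfVars_pow_four (fun _ => by simp) hf)
      (Finsupp.single s 1 + edgeExponent p q) (by simp [edgeExponent])
    rwa [coeff_X_mul] at this
  have hsub := coeff_eq_zero hqg
  rw [coeff_sub, coeff_eq_zero hpg, ← monomial_edgeExponent, coeff_monomial, if_pos rfl,
    sub_zero] at hsub
  exact one_ne_zero hsub

variable [Finite ι]

lemma not_isCMQuot_of_X_mul_monomial_notMem (ha : ∀ i, a i ≠ 0) (hap : a p = 1) (hbp : b p = 1)
    {e : ι ⊕ ι →₀ ℕ} (he : monomial e 1 ∈ whiskerIdeal K a b)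
    (hsq : X (inl p) * (X (inl p) * monomial e 1) ∈ whiskerIdeal K a b ^ 2)
    (hnotMem : X (inl p) * monomial e 1 ∉ whiskerIdeal K a b ^ 2) :
    ¬ IsCMQuot (whiskerIdeal K a b ^ 2) := by
  classical
  cases nonempty_fintype ι
  intro hcm
  obtain ⟨P, hP, hdim⟩ := hcm.ringKrullDim_le_of_colon_le (f := X (inl p) * monomial e 1) <| by
    intro s hs
    rw [Submodule.mem_colon_singleton, smul_eq_mul] at hs
    rw [X, monomial_mul, one_mul, whiskerIdeal_pow_eq_span] at hs hnotMem
    exact mem_idealOfVars_iff_constantCoeff.2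
      (constantCoeff_eq_zero_of_mul_monomial_mem hnotMem hs)
  have mem_P {v : ι ⊕ ι} (hv : X v * X (inl p) ∈ whiskerIdeal K a b) : X v ∈ P := by
    refine hP (Submodule.mem_colon_singleton.2 ?_)
    rw [smul_eq_mul, ← mul_assoc, sq]
    exact Ideal.mul_mem_mul hv he
  have hxP (i : ι) : X (inl i) ∈ P := by
    obtain rfl | hi := eq_or_ne i p
    · exact hP (Submodule.mem_colon_singleton.2 hsq)
    · exact mem_P (X_mul_X_mem_whiskerIdeal hi)
  have hyP : X (inr p) ∈ P := mem_P <| by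
    simpa [hap, hbp, mul_comm] using X_pow_mul_X_pow_mem_whiskerIdeal (K := K) (a := a) (b := b) p
  have hdim_P := ringKrullDim_quotient_le_card (p := P)
    ((Finset.univ.erase p).map ⟨inr, inr_injective⟩) <| by
      rintro (i | i) hi
      · exact hxP i
      · obtain rfl : i = p := by simpa using hi
        exact hyP
  have hcard := hdim.trans hdim_P
  rw [ringKrullDim_quotient_whiskerIdeal_pow ha two_ne_zero, Finset.card_map] at hcard
  exact (Finset.card_erase_lt_of_mem (Finset.mem_univ p)).not_ge (by exact_mod_cast hcard)

lemma not_isCMQuot_whiskerIdeal_sq_of_ne_of_ne (ha : ∀ i, a i ≠ 0) (hab : ∀ i, 2 ≤ a i + b i)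
    (hap : a p = 1) (hbp : b p = 1) (hpq : p ≠ q) {j : ι} (hpj : p ≠ j) (hqj : q ≠ j) :
    ¬ IsCMQuot (whiskerIdeal K a b ^ 2) := by
  refine not_isCMQuot_of_X_mul_monomial_notMem ha hap hbp (e := edgeExponent q j) ?_ ?_ ?_
  · rw [monomial_edgeExponent]
    exact X_mul_X_mem_whiskerIdeal hqj
  · have heq : X (inl p) * (X (inl p) * monomial (edgeExponent q j) 1) =
        (X (inl p) * X (inl q)) * (X (inl p) * X (inl j) : MvPolynomial _ K) := by
      rw [monomial_edgeExponent]
      ring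
    rw [heq, sq]
    exact Ideal.mul_mem_mul (X_mul_X_mem_whiskerIdeal hpq) (X_mul_X_mem_whiskerIdeal hpj)
  · refine fun hmem => absurd (whiskerIdeal_sq_le_idealOfVars_pow_four hab hmem) ?_
    rw [X, monomial_mul, one_mul, monomial_mem_pow_idealOfVars_iff _ _ one_ne_zero]
    simp [edgeExponent]

lemma X_mul_pendant_notMem_whiskerIdeal_sq (ha : ∀ i, a i ≠ 0) (hbp : b p = 1) (hpq : p ≠ q) :
    X (inl p) * monomial (pendantExponent a b q) 1 ∉ whiskerIdeal K a b ^ 2 := by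
  classical
  cases nonempty_fintype ι
  rw [X, monomial_mul, one_mul, mem_whiskerIdeal_pow_iff, support_monomial, if_neg one_ne_zero,
    Finset.coe_singleton, Set.singleton_subset_iff]
  rintro ⟨c, d, hcd, hx, hy⟩
  simp only [Finsupp.add_apply, pendantExponent_inl, pendantExponent_inr] at hx hy
  have hcp : c p = 0 := by simpa [hbp, hpq] using hy p
  have hdp : d p ≤ 1 := by simpa [hcp, hpq] using hx p
  have hq : a q * c q + d q ≤ a q := by simpa [hpq] using hx q
  have hothers (i) (hip : i ≠ p) (hiq : i ≠ q) : c i = 0 ∧ d i = 0 := by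
    simpa [hip.symm, hiq, ha] using hx i
  have hc_sum : ∑ i, c i = c q := Fintype.sum_eq_single q fun i hiq => by
    obtain rfl | hip := eq_or_ne i p
    · exact hcp
    · exact (hothers i hip hiq).1
  have hd_sum : ∑ i, d i = d p + d q := Fintype.sum_eq_add p q hpq fun i hi =>
    (hothers i hi.1 hi.2).2
  have hcd_total := hcd.1
  have hcd_q := hcd.2 q
  have hcq : c q ≤ 1 := Nat.le_of_mul_le_mul_left (by omega) (Nat.pos_of_ne_zero (ha q))
  interval_cases c q <;> omega

lemma not_isCMQuot_whiskerIdeal_sq_of_two_le (ha : ∀ i, a i ≠ 0) (hap : a p = 1) (hbp : b p = 1)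
    (hpq : p ≠ q) (haq : 2 ≤ a q) : ¬ IsCMQuot (whiskerIdeal K a b ^ 2) := by
  refine not_isCMQuot_of_X_mul_monomial_notMem ha hap hbp (e := pendantExponent a b q) ?_ ?_
    (X_mul_pendant_notMem_whiskerIdeal_sq ha hbp hpq)
  · rw [monomial_pendantExponent]
    exact X_pow_mul_X_pow_mem_whiskerIdeal q
  · obtain ⟨k, hk⟩ := exists_add_of_le haq
    have heq : X (inl p) * (X (inl p) * monomial (pendantExponent a b q) 1) =
        (X (inl p) * X (inl q)) ^ 2 * (X (inl q) ^ k * X (inr q) ^ b q : MvPolynomial _ K) := by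
      rw [monomial_pendantExponent, hk]
      ring
    rw [heq]
    exact Ideal.mul_mem_right _ _ (Ideal.pow_mem_pow (X_mul_X_mem_whiskerIdeal hpq) 2)

lemma not_isCMQuot_whiskerIdeal_sq [Nontrivial ι] {m : ι → ℕ} (hm : ∀ i, m i ≠ 0)
    (hp : m p = 1) : ¬ IsCMQuot (whiskerIdeal K m m ^ 2) := by
  obtain ⟨q, hqp⟩ := exists_ne p
  obtain hq | hq := le_or_gt 2 (m q)
  · exact not_isCMQuot_whiskerIdeal_sq_of_two_le hm hp hp hqp.symm hq
  by_cases hall : ∀ i, i = p ∨ i = q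
  · have hm_one : m = 1 := funext fun i => by
      obtain rfl | rfl := hall i
      · exact hp
      · exact (Nat.lt_succ_iff.1 hq).antisymm (Nat.one_le_iff_ne_zero.2 (hm i))
    exact hm_one ▸ not_isCMQuot_whiskerIdeal_one_sq hqp.symm hall
  · push Not at hall
    obtain ⟨j, hjp, hjq⟩ := hall
    exact not_isCMQuot_whiskerIdeal_sq_of_ne_of_ne hm (fun i => by have := hm i; omega) hp hp
      hqp.symm hjp.symm hjq.symm

end Necessity

end WhiskerIdeal

/-- Let `G` be the graph on `{x_1,...,x_t,y_1,...,y_t}` (`x_i = inl i`, `y_i = inr i`),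
`t ≥ 2`, whose edges are the matching edges `x_iy_i` and all edges `x_ix_j` (`i ≠ j`),
with weight `1` on each `x_ix_j` and weight `m_i` on `x_iy_i`. Then
`R/I(G_ω)^n` is Cohen–Macaulay for all `n ≥ 1` iff `m_i ≥ 2` for all `i`. -/
theorem cm_iff_weights_ge_two {K : Type*} [Field K] (t : ℕ) (ht : 2 ≤ t)
    (m : Fin t → ℕ) (hm : ∀ i, 0 < m i) :
    (∀ n : ℕ, 1 ≤ n →
      IsCMQuot ((Ideal.span
        ({f | ∃ i j : Fin t, i ≠ j ∧
            f = X (inl i) * X (inl j)} ∪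
         {f | ∃ i : Fin t, f = (X (inl i) * X (inr i)) ^ m i} :
          Set (MvPolynomial (Fin t ⊕ Fin t) K))) ^ n)) ↔
    ∀ i : Fin t, 2 ≤ m i := by
  have : Nontrivial (Fin t) := Fin.nontrivial_iff_two_le.2 ht
  simp only [mul_pow]
  change (∀ n, 1 ≤ n → IsCMQuot (whiskerIdeal K m m ^ n)) ↔ _
  refine ⟨fun hcm i => ?_, fun hm_two n hn =>
    isCMQuot_whiskerIdeal_pow hm_two (Nat.one_le_iff_ne_zero.1 hn)⟩
  by_contra hlt
  have hmi : m i = 1 := by have := hm i; omega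
  exact not_isCMQuot_whiskerIdeal_sq (fun j => (hm j).ne') hmi (hcm 2 one_le_two)
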